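/- Let q₁,…,q₆ ∈ ℝ² be six points in general position (no three collinear), and let G be the set of all 13 pairs of {1,…,6} except {2,5} and {3,6}. Then the space of linear dependences among the rows of C₃(q₁,…,q₆) indexed by G is exactly one-dimensional, and every nonzero such dependence λ satisfies λ_e ≠ 0 for every e ∈ G with e ≠ {1,4}. -/

import Mathlib

open scoped BigOperators

/-- A pair `{i,j}` of distinct vertices of the `n`-gon.  Vertices `1,…,n` are represented by
`Fin n` (vertex `i` corresponds to `i-1 : Fin n`), and a pair is recorded with its endpoints
in increasing order. -/
abbrev Pair (n : ℕ) := {p : Fin n × Fin n // p.1 < p.2}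

/-- Two pairs `{i,j}` (`i<j`) and `{k,l}` (`k<l`) cross if `i<k<j<l` or `k<i<l<j`. -/
def Cross {n : ℕ} (e f : Pair n) : Prop :=
  (e.val.1 < f.val.1 ∧ f.val.1 < e.val.2 ∧ e.val.2 < f.val.2) ∨
  (f.val.1 < e.val.1 ∧ e.val.1 < f.val.2 ∧ f.val.2 < e.val.2)

/-- A set of pairs is `(k+1)`-crossing-free if it contains no `k+1` pairwise crossing pairs. -/
def CrossingFree (n k : ℕ) (S : Set (Pair n)) : Prop :=
  ¬ ∃ C : Finset (Pair n), ↑C ⊆ S ∧ C.card = k + 1 ∧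
      ∀ e ∈ C, ∀ f ∈ C, e ≠ f → Cross e f

/-- A `k`-triangulation of the `n`-gon: an inclusion-maximal `(k+1)`-crossing-free set. -/
def IsTriangulation (n k : ℕ) (T : Set (Pair n)) : Prop :=
  CrossingFree n k T ∧ ∀ S : Set (Pair n), CrossingFree n k S → T ⊆ S → S = T

/-- The length of a pair `{i,j}` with respect to the `N`-gon: `min (j-i) (N-(j-i))`. -/
def pairLen (N : ℕ) {n : ℕ} (e : Pair n) : ℕ :=
  min ((e.val.2 : ℕ) - (e.val.1 : ℕ)) (N - ((e.val.2 : ℕ) - (e.val.1 : ℕ)))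

/-- A pair is `k`-relevant in the `N`-gon if its length is at least `k+1`. -/
def Relevant (N k : ℕ) {n : ℕ} (e : Pair n) : Prop := k + 1 ≤ pairLen N e

/-- The 2×2 determinant `det (u v)` of two plane vectors. -/
def det2 (u v : ℝ × ℝ) : ℝ := u.1 * v.2 - u.2 * v.1

/-- Points in convex position, listed in counterclockwise order along their convex hull:
they are distinct and every triple `i<j<k` is positively oriented. -/
def ConvexPosition {n : ℕ} (q : Fin n → ℝ × ℝ) : Prop :=
  Function.Injective q ∧
  ∀ i j k : Fin n, i < j → j < k → 0 < det2 (q j - q i) (q k - q i)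

/-- `p` lies on the line through `a` and `b`. -/
def onLine (a b p : ℝ × ℝ) : Prop := det2 (b - a) (p - a) = 0

/-- Row of the bar-and-joint rigidity matrix `R(p)` indexed by the pair `e`:
`p_i - p_j` in block `i`, `p_j - p_i` in block `j`, zeros elsewhere. -/
def bjRow {n d : ℕ} (p : Fin n → Fin d → ℝ) (e : Pair n) : Fin n × Fin d → ℝ :=
  fun ma =>
    if ma.1 = e.val.1 then p e.val.1 ma.2 - p e.val.2 ma.2
    else if ma.1 = e.val.2 then p e.val.2 ma.2 - p e.val.1 ma.2
    else 0

/-- Row of the hyperconnectivity matrix `H(p)` indexed by the pair `e`: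
`p_j` in block `i`, `-p_i` in block `j`, zeros elsewhere. -/
def hypRow {n d : ℕ} (p : Fin n → Fin d → ℝ) (e : Pair n) : Fin n × Fin d → ℝ :=
  fun ma =>
    if ma.1 = e.val.1 then p e.val.2 ma.2
    else if ma.1 = e.val.2 then - p e.val.1 ma.2
    else 0

/-- The vector `c_{ij} = ((x_i-x_j)^{d-1}, (x_i-x_j)^{d-2}(y_i-y_j), …, (y_i-y_j)^{d-1})`. -/
def cvec (d : ℕ) (qi qj : ℝ × ℝ) : Fin d → ℝ :=
  fun a => (qi.1 - qj.1) ^ (d - 1 - (a : ℕ)) * (qi.2 - qj.2) ^ (a : ℕ)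

/-- Row of the cofactor rigidity matrix `C_d(q)` indexed by the pair `e`:
`c_{ij}` in block `i`, `-c_{ij}` in block `j`, zeros elsewhere. -/
def cofRow (d : ℕ) {n : ℕ} (q : Fin n → ℝ × ℝ) (e : Pair n) : Fin n × Fin d → ℝ :=
  fun ma =>
    if ma.1 = e.val.1 then cvec d (q e.val.1) (q e.val.2) ma.2
    else if ma.1 = e.val.2 then - cvec d (q e.val.1) (q e.val.2) ma.2
    else 0

/-- `x_{ij} = X_i Z_j - Z_i X_j` for vectors in `ℝ³`. -/
def xQ (Qi Qj : ℝ × ℝ × ℝ) : ℝ := Qi.1 * Qj.2.2 - Qi.2.2 * Qj.1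

/-- `y_{ij} = Y_i Z_j - Z_i Y_j` for vectors in `ℝ³`. -/
def yQ (Qi Qj : ℝ × ℝ × ℝ) : ℝ := Qi.2.1 * Qj.2.2 - Qi.2.2 * Qj.2.1

/-- The vector `c_{ij} = (x_{ij}^{d-1}, x_{ij}^{d-2} y_{ij}, …, y_{ij}^{d-1})`. -/
def gcvec (d : ℕ) (Qi Qj : ℝ × ℝ × ℝ) : Fin d → ℝ :=
  fun a => (xQ Qi Qj) ^ (d - 1 - (a : ℕ)) * (yQ Qi Qj) ^ (a : ℕ)

/-- Row of the generalized cofactor rigidity matrix `C_d(Q)` for vectors in `ℝ³`. -/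
def gcofRow (d : ℕ) {n : ℕ} (Q : Fin n → ℝ × ℝ × ℝ) (e : Pair n) : Fin n × Fin d → ℝ :=
  fun ma =>
    if ma.1 = e.val.1 then gcvec d (Q e.val.1) (Q e.val.2) ma.2
    else if ma.1 = e.val.2 then - gcvec d (Q e.val.1) (Q e.val.2) ma.2
    else 0

/-- The cone of all nonnegative linear combinations of `{v e : e ∈ S}`. -/
def coneOf {n : ℕ} {V : Type*} [AddCommGroup V] [Module ℝ V]
    (v : Pair n → V) (S : Set (Pair n)) : Set V :=
  {x | ∃ c : Pair n → ℝ, (∀ e, 0 ≤ c e) ∧ (∀ e, c e ≠ 0 → e ∈ S) ∧ x = ∑ e, c e • v e}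

/-- The vectors `(v e)` realize the `k`-associahedron of the `n`-gon as a complete
simplicial fan: (a) the vectors of every `k`-triangulation are linearly independent;
(b) cones of two `k`-triangulations intersect in the cone of their intersection;
(c) the union of all the cones is the linear span of all the vectors. -/
def RealizesFan (n k : ℕ) {V : Type*} [AddCommGroup V] [Module ℝ V]
    (v : Pair n → V) : Prop :=
  (∀ T : Set (Pair n), IsTriangulation n k T →
      LinearIndependent ℝ (fun e : T => v e.val)) ∧
  (∀ T T' : Set (Pair n), IsTriangulation n k T → IsTriangulation n k T' →
      coneOf v T ∩ coneOf v T' = coneOf v (T ∩ T')) ∧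
  (⋃ T ∈ {T : Set (Pair n) | IsTriangulation n k T}, coneOf v T) =
    (Submodule.span ℝ (Set.range v) : Set V)

/-- The set of all 13 pairs of `{1,…,6}` except `{2,5}` and `{3,6}` (0-indexed: `(1,4)`,
`(2,5)`). -/
def G13 : Set (Pair 6) :=
  {e | e.val ≠ ((1 : Fin 6), (4 : Fin 6)) ∧ e.val ≠ ((2 : Fin 6), (5 : Fin 6))}

/-!
A dependence `lam` assigns to each vertex `v` weights on the edges at `v` for which the weighted sum
of the vectors `c_{vw}` vanishes. By the projective Vandermonde determinant, `d` vectors `c_{vw}` in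
pairwise independent directions are independent, so no vertex carries exactly `1, …, d` nonzero
weights. In `G` the vertices `2, 3, 5, 6` have degree `4 = d + 1`: their edges carry either only
zero or only nonzero weights. The `4`-cycle `2 3 5 6` lies in `G` and every edge other than `{1,4}`
meets it, so a single zero weight off `{1,4}` propagates to all those edges, and then `{1,4}`, alone
at vertex `1`, vanishes too. Hence the space of dependences has dimension at most one. It is nonzero
because `C₃` of `n ≥ 3` distinct points has at least six independent column relations, the trivial
motions, so its rank is at most `3n - 6`, which is `12 < 13` here.
-/

/-- The space of linear dependences among the rows of `C_d(q)` indexed by `S`, each extended by zero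
to all pairs. -/
def cofDependences (d : ℕ) {n : ℕ} (q : Fin n → ℝ × ℝ) (S : Set (Pair n)) :
    Submodule ℝ (Pair n → ℝ) where
  carrier := {lam | (∀ e, lam e ≠ 0 → e ∈ S) ∧ ∑ e, lam e • cofRow d q e = 0}
  zero_mem' := by simp
  add_mem' := by
    rintro lam mu ⟨hlam, hlam0⟩ ⟨hmu, hmu0⟩
    refine ⟨fun e he => ?_, by simp [add_smul, Finset.sum_add_distrib, hlam0, hmu0]⟩
    by_contra heS
    exact he (by simp [not_imp_comm.1 (hlam e) heS, not_imp_comm.1 (hmu e) heS])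
  smul_mem' := by
    rintro c lam ⟨hlam, hlam0⟩
    refine ⟨fun e he => hlam e (right_ne_zero_of_mul he), ?_⟩
    simp [mul_smul, ← Finset.smul_sum, hlam0]

/-- Points in general position: no three of them are collinear. -/
def GeneralPosition {n : ℕ} (q : Fin n → ℝ × ℝ) : Prop :=
  ∀ i j k : Fin n, i ≠ j → i ≠ k → j ≠ k → det2 (q j - q i) (q k - q i) ≠ 0

lemma ne_of_det2_sub_ne_zero {p q r : ℝ × ℝ} (h : det2 (q - p) (r - p) ≠ 0) :
    p ≠ q ∧ p ≠ r ∧ q ≠ r := by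
  refine ⟨?_, ?_, ?_⟩ <;> rintro rfl <;> exact h (by simp [det2, mul_comm])

/-! ### Weights at a vertex -/

/-- The coefficient of `c_{vw}` in the `v`-block of `∑ e, lam e • cofRow d q e`. It is the weight of
the edge `{v,w}` up to the sign `(-1) ^ d` for `w < v`, because `-c_{wv} = (-1) ^ d • c_{vw}`; it is
`0` for `v = w`. -/
def signedWeight (d : ℕ) {n : ℕ} (lam : Pair n → ℝ) (v w : Fin n) : ℝ :=
  if h : v < w then lam ⟨(v, w), h⟩ else if h : w < v then (-1) ^ d * lam ⟨(w, v), h⟩ else 0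

section signedWeight

variable {d n : ℕ} {lam : Pair n → ℝ} {v w : Fin n}

lemma signedWeight_eq_zero_iff : signedWeight d lam v w = 0 ↔
    (∀ h : v < w, lam ⟨(v, w), h⟩ = 0) ∧ ∀ h : w < v, lam ⟨(w, v), h⟩ = 0 := by
  rcases lt_trichotomy v w with h | rfl | h
  · simp [signedWeight, h, h.not_gt]
  · simp [signedWeight]
  · simp [signedWeight, h, h.not_gt]

lemma signedWeight_self : signedWeight d lam v v = 0 := by
  simp [signedWeight]

lemma signedWeight_comm_eq_zero (h : signedWeight d lam v w = 0) : signedWeight d lam w v = 0 :=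
  signedWeight_eq_zero_iff.2 (signedWeight_eq_zero_iff.1 h).symm

lemma eq_zero_of_forall_signedWeight_eq_zero (h : ∀ v w, signedWeight d lam v w = 0) : lam = 0 :=
  funext fun e => (signedWeight_eq_zero_iff.1 (h e.val.1 e.val.2)).1 e.prop

end signedWeight

lemma cvec_swap (d : ℕ) (p r : ℝ × ℝ) (a : Fin d) :
    -cvec d p r a = (-1) ^ d * cvec d r p a := by
  have hsign : (-1 : ℝ) ^ d = -((-1) ^ (d - 1 - a : ℕ) * (-1) ^ (a : ℕ)) := by
    rw [← pow_add, ← mul_neg_one (_ ^ _), ← pow_succ, show d - 1 - a + a + 1 = d by omega]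
  rw [hsign, cvec, cvec, ← neg_sub r.1 p.1, ← neg_sub r.2 p.2, neg_pow (r.1 - p.1),
    neg_pow (r.2 - p.2)]
  ring

lemma cofRow_apply_eq_sub {d n : ℕ} (q : Fin n → ℝ × ℝ) (e : Pair n) (v : Fin n) (a : Fin d) :
    cofRow d q e (v, a) = (if v = e.val.1 then cvec d (q e.val.1) (q e.val.2) a else 0) -
      if v = e.val.2 then cvec d (q e.val.1) (q e.val.2) a else 0 := by
  have hne : e.val.1 ≠ e.val.2 := e.prop.ne
  by_cases h : v = e.val.1 <;> by_cases h' : v = e.val.2 <;> simp_all [cofRow]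

lemma sum_pair_eq_sum_sum_dite {n : ℕ} {M : Type*} [AddCommMonoid M] (f : Pair n → M) :
    ∑ e, f e = ∑ i, ∑ j, if h : i < j then f ⟨(i, j), h⟩ else 0 := by
  rw [← Fintype.sum_prod_type' (f := fun i j => if h : i < j then f ⟨(i, j), h⟩ else 0),
    Finset.sum_dite, Finset.sum_const_zero, add_zero]
  exact (Finset.sum_bij (fun e _ => ⟨e.val, by simp [e.prop]⟩) (by simp) (by simp)
    (by simp) (by simp))

lemma signedWeight_mul_cvec {d n : ℕ} (q : Fin n → ℝ × ℝ) (lam : Pair n → ℝ) (v w : Fin n)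
    (a : Fin d) : signedWeight d lam v w * cvec d (q v) (q w) a =
      (if h : v < w then lam ⟨(v, w), h⟩ * cvec d (q v) (q w) a else 0) -
        if h : w < v then lam ⟨(w, v), h⟩ * cvec d (q w) (q v) a else 0 := by
  rcases lt_trichotomy v w with h | rfl | h
  · simp [signedWeight, h, h.not_gt]
  · simp [signedWeight]
  · simp only [signedWeight, h, h.not_gt, dite_true, dite_false, zero_sub, ← mul_neg, cvec_swap]
    ring

lemma sum_smul_cofRow_apply {d n : ℕ} (q : Fin n → ℝ × ℝ) (lam : Pair n → ℝ) (v : Fin n)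
    (a : Fin d) : (∑ e, lam e • cofRow d q e) (v, a) =
      ∑ w, signedWeight d lam v w * cvec d (q v) (q w) a := by
  have hfirst : ∑ e : Pair n, lam e * (if v = e.val.1 then cvec d (q e.val.1) (q e.val.2) a else 0)
      = ∑ w, if h : v < w then lam ⟨(v, w), h⟩ * cvec d (q v) (q w) a else 0 := by
    rw [sum_pair_eq_sum_sum_dite, Finset.sum_eq_single v] <;> simp +contextual [eq_comm]
  have hsecond : ∑ e : Pair n, lam e * (if v = e.val.2 then cvec d (q e.val.1) (q e.val.2) a else 0)
      = ∑ w, if h : w < v then lam ⟨(w, v), h⟩ * cvec d (q w) (q v) a else 0 := by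
    rw [sum_pair_eq_sum_sum_dite, Finset.sum_comm, Finset.sum_eq_single v] <;>
      simp +contextual [eq_comm]
  simp only [Finset.sum_apply, Pi.smul_apply, smul_eq_mul, cofRow_apply_eq_sub, mul_sub,
    signedWeight_mul_cvec, Finset.sum_sub_distrib, hfirst, hsecond]

lemma linearIndependent_cvec {d : ℕ} {p : ℝ × ℝ} {r : Fin d → ℝ × ℝ}
    (hr : Pairwise fun i j => det2 (r i - p) (r j - p) ≠ 0) :
    LinearIndependent ℝ fun i => cvec d p (r i) := by
  have hdet : (Matrix.projVandermonde (fun i => p.2 - (r i).2) fun i => p.1 - (r i).1).det ≠ 0 := by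
    rw [Matrix.det_projVandermonde]
    refine Finset.prod_ne_zero_iff.2 fun i _ => Finset.prod_ne_zero_iff.2 fun j hj => ?_
    convert hr (Finset.mem_Ioi.1 hj).ne using 1
    simp only [det2, Prod.fst_sub, Prod.snd_sub]
    ring
  have hrow : (fun i => cvec d p (r i)) =
      (Matrix.projVandermonde (fun i => p.2 - (r i).2) fun i => p.1 - (r i).1).row := by
    ext i a
    simp only [cvec, Matrix.row, Matrix.projVandermonde_apply, Fin.val_rev]
    rw [mul_comm, Nat.sub_sub, add_comm 1]
  exact hrow ▸ Matrix.linearIndependent_rows_of_det_ne_zero hdet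

lemma signedWeight_eq_zero_of_card_eq {d n : ℕ} {q : Fin n → ℝ × ℝ} (hq : GeneralPosition q)
    {S : Set (Pair n)} {lam : Pair n → ℝ} (hlam : lam ∈ cofDependences d q S) {v : Fin n}
    {N : Finset (Fin n)} (hN : N.card = d) (hvN : v ∉ N)
    (hsupp : ∀ w ∉ N, signedWeight d lam v w = 0) (w : Fin n) : signedWeight d lam v w = 0 := by
  have hind : LinearIndepOn ℝ (fun w => cvec d (q v) (q w)) N := by
    let f := N.orderIsoOfFin hN
    refine (linearIndependent_equiv f.toEquiv).1 (linearIndependent_cvec fun i j hij => ?_)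
    exact hq _ _ _ (ne_of_mem_of_not_mem (f i).2 hvN).symm
      (ne_of_mem_of_not_mem (f j).2 hvN).symm (fun h => hij (f.injective (Subtype.ext h)))
  have hsum : ∑ w ∈ N, signedWeight d lam v w • cvec d (q v) (q w) = 0 := by
    ext a
    rw [Finset.sum_apply, Finset.sum_subset N.subset_univ fun w _ hw => by simp [hsupp w hw]]
    exact (sum_smul_cofRow_apply q lam v a).symm.trans (congrFun hlam.2 (v, a))
  by_cases hw : w ∈ N
  · exact linearIndepOn_finset_iff.1 hind _ hsum w hw
  · exact hsupp w hw

/-! ### The rank of the cofactor matrix for `d = 3` -/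

/-- Six vector fields `F : ℝ² → ℝ³`, evaluated at the points `q i`, that satisfy
`c_{ij} ⬝ (F (q i) - F (q j)) = 0` for all `i`, `j`: the trivial motions of `C₃(q)`. If `g` is a
linear functional on quadratic polynomials in the plane, then `u ↦ g (det2 u (· - q i) ^ 2)` is a
quadratic form in `u` that takes the same value for `q i` and `q j` at `u = q i - q j`; the six
fields arise from a basis of functionals. -/
def trivialMotion {n : ℕ} (q : Fin n → ℝ × ℝ) : Matrix (Fin 6) (Fin n × Fin 3) ℝ :=
  Matrix.of fun k ia =>
    let x := (q ia.1).1
    let y := (q ia.1).2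
    ![![1, 0, 0], ![0, 1, 0], ![0, 0, 1], ![-y, x, 0], ![0, -y, x], ![y ^ 2, -2 * x * y, x ^ 2]]
      k ia.2

lemma dotProduct_cofRow {d n : ℕ} (q : Fin n → ℝ × ℝ) (F : Fin n × Fin d → ℝ) (e : Pair n) :
    F ⬝ᵥ cofRow d q e =
      ∑ a, (F (e.val.1, a) - F (e.val.2, a)) * cvec d (q e.val.1) (q e.val.2) a := by
  simp only [dotProduct, Fintype.sum_prod_type_right, cofRow_apply_eq_sub, mul_sub, sub_mul,
    mul_ite, mul_zero, Finset.sum_sub_distrib, Finset.sum_ite_eq', Finset.mem_univ, if_true]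

lemma trivialMotion_mul_cofRow_transpose {n : ℕ} (q : Fin n → ℝ × ℝ) :
    trivialMotion q * (Matrix.of (cofRow 3 q)).transpose = 0 := by
  ext k e
  change trivialMotion q k ⬝ᵥ cofRow 3 q e = 0
  rw [dotProduct_cofRow, Fin.sum_univ_three]
  fin_cases k <;> simp [trivialMotion, cvec] <;> ring

section trivialMotion

variable {n : ℕ} {q : Fin n → ℝ × ℝ} {g : Fin 6 → ℝ}

lemma trivialMotion_equations (hg : ∑ k, g k • (trivialMotion q).row k = 0) (i : Fin n) :
    g 0 - g 3 * (q i).2 + g 5 * (q i).2 ^ 2 = 0 ∧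
      g 1 + g 3 * (q i).1 - g 4 * (q i).2 - 2 * g 5 * (q i).1 * (q i).2 = 0 ∧
      g 2 + g 4 * (q i).1 + g 5 * (q i).1 ^ 2 = 0 := by
  have h0 : g 0 + g 3 * -(q i).2 + g 5 * (q i).2 ^ 2 = 0 := by
    simpa [Fin.sum_univ_six, trivialMotion] using congrFun hg (i, 0)
  have h1 : g 1 + g 3 * (q i).1 + g 4 * -(q i).2 + g 5 * (-2 * (q i).1 * (q i).2) = 0 := by
    simpa [Fin.sum_univ_six, trivialMotion] using congrFun hg (i, 1)
  have h2 : g 2 + g 4 * (q i).1 + g 5 * (q i).1 ^ 2 = 0 := by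
    simpa [Fin.sum_univ_six, trivialMotion] using congrFun hg (i, 2)
  exact ⟨by linear_combination h0, by linear_combination h1, h2⟩

lemma trivialMotion_coeff_of_ne (hg : ∑ k, g k • (trivialMotion q).row k = 0) {i j : Fin n}
    (hij : q i ≠ q j) :
    g 3 = g 5 * ((q i).2 + (q j).2) ∧ g 4 = -(g 5 * ((q i).1 + (q j).1)) := by
  obtain ⟨hi0, hi1, hi2⟩ := trivialMotion_equations hg i
  obtain ⟨hj0, hj1, hj2⟩ := trivialMotion_equations hg j
  have hy : ((q i).2 - (q j).2) * (g 3 - g 5 * ((q i).2 + (q j).2)) = 0 := by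
    linear_combination hj0 - hi0
  have hx : ((q i).1 - (q j).1) * (g 4 + g 5 * ((q i).1 + (q j).1)) = 0 := by
    linear_combination hi2 - hj2
  have hxy : ((q i).1 - (q j).1) * (g 3 - g 5 * ((q i).2 + (q j).2)) =
      ((q i).2 - (q j).2) * (g 4 + g 5 * ((q i).1 + (q j).1)) := by
    linear_combination hi1 - hj1
  rw [← sub_eq_zero, eq_neg_iff_add_eq_zero]
  by_cases hx0 : (q i).1 = (q j).1
  · have hy0 : (q i).2 - (q j).2 ≠ 0 := fun h => hij (Prod.ext hx0 (sub_eq_zero.1 h))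
    rw [sub_eq_zero.2 hx0, zero_mul] at hxy
    exact ⟨(mul_eq_zero_iff_left hy0).1 hy, (mul_eq_zero_iff_left hy0).1 hxy.symm⟩
  · have hg4 := (mul_eq_zero_iff_left (sub_ne_zero.2 hx0)).1 hx
    rw [hg4, mul_zero] at hxy
    exact ⟨(mul_eq_zero_iff_left (sub_ne_zero.2 hx0)).1 hxy, hg4⟩

lemma linearIndependent_trivialMotion {i j k : Fin n} (hij : q i ≠ q j) (hik : q i ≠ q k)
    (hjk : q j ≠ q k) : LinearIndependent ℝ (trivialMotion q).row := by
  rw [Fintype.linearIndependent_iff]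
  intro g hg
  obtain ⟨hj3, hj4⟩ := trivialMotion_coeff_of_ne hg hij
  obtain ⟨hk3, hk4⟩ := trivialMotion_coeff_of_ne hg hik
  have h5 : g 5 = 0 := by
    by_contra hne
    refine hjk (Prod.ext (mul_left_cancel₀ hne ?_) (mul_left_cancel₀ hne ?_))
    · linear_combination hj4 - hk4
    · linear_combination hk3 - hj3
  have h3 : g 3 = 0 := by simpa [h5] using hj3
  have h4 : g 4 = 0 := by simpa [h5] using hj4
  obtain ⟨h0, h1, h2⟩ := trivialMotion_equations hg i
  simp only [h3, h4, h5, zero_mul, mul_zero, sub_zero, add_zero] at h0 h1 h2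
  intro m
  fin_cases m
  exacts [h0, h1, h2, h3, h4, h5]

end trivialMotion

lemma rank_cofRow_add_six_le {n : ℕ} {q : Fin n → ℝ × ℝ} {i j k : Fin n}
    (hij : q i ≠ q j) (hik : q i ≠ q k) (hjk : q j ≠ q k) :
    (Matrix.of (cofRow 3 q)).rank + 6 ≤ 3 * n := by
  have h := Matrix.rank_add_rank_le_card_of_mul_eq_zero (trivialMotion_mul_cofRow_transpose q)
  rw [(linearIndependent_trivialMotion hij hik hjk).rank_matrix, Matrix.rank_transpose] at h
  simpa [add_comm, mul_comm] using h

lemma exists_mem_cofDependences_ne_zero {n : ℕ} {q : Fin n → ℝ × ℝ} {i j k : Fin n}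
    (hij : q i ≠ q j) (hik : q i ≠ q k) (hjk : q j ≠ q k) {S : Finset (Pair n)}
    (hS : 3 * n < S.card + 6) : ∃ lam ∈ cofDependences 3 q S, lam ≠ 0 := by
  have hdep : ¬LinearIndepOn ℝ (cofRow 3 q) S := fun hind => by
    have hcard : S.card ≤ (Matrix.of (cofRow 3 q)).rank := by
      rw [Matrix.rank_eq_finrank_span_row, ← Fintype.card_coe]
      refine (finrank_span_eq_card (b := fun e : S => cofRow 3 q e) hind).symm.trans_le ?_
      exact Submodule.finrank_mono (Submodule.span_mono (Set.range_subset_iff.2 fun e => ⟨e, rfl⟩))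
    have := rank_cofRow_add_six_le hij hik hjk
    omega
  obtain ⟨mu, hsum, e, he, hne⟩ := not_linearIndepOn_finset_iff.1 hdep
  refine ⟨fun e => if e ∈ S then mu e else 0,
    ⟨fun _ => by simp +contextual, by simpa [ite_smul] using hsum⟩, ?_⟩
  exact fun h => hne (by simpa [he] using congrFun h e)

/-! ### The graph `G13` -/

section G13

variable {q : Fin 6 → ℝ × ℝ} {lam : Pair 6 → ℝ}

lemma signedWeight_add_three_eq_zero (hlam : ∀ e, lam e ≠ 0 → e ∈ G13) {v : Fin 6}
    (hv0 : v ≠ 0) (hv3 : v ≠ 3) : signedWeight 3 lam v (v + 3) = 0 := by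
  refine signedWeight_eq_zero_iff.2 ⟨fun h => ?_, fun h => ?_⟩ <;>
  · refine not_imp_comm.1 (hlam _) fun hG => ?_
    simp only [G13, Set.mem_ofPred_eq] at hG
    revert v
    decide

lemma signedWeight_eq_zero_of_degree_four (hq : GeneralPosition q)
    (hlam : lam ∈ cofDependences 3 q G13) {v w : Fin 6} (hv0 : v ≠ 0) (hv3 : v ≠ 3)
    (hwv : w ≠ v) (hwv3 : w ≠ v + 3) (hzero : signedWeight 3 lam v w = 0) (u : Fin 6) :
    signedWeight 3 lam v u = 0 := by
  have hcard : ∀ v w : Fin 6, w ≠ v → w ≠ v + 3 → ({v, v + 3, w}ᶜ : Finset (Fin 6)).card = 3 := by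
    decide
  refine signedWeight_eq_zero_of_card_eq hq hlam (hcard v w hwv hwv3) (by simp) (fun x hx => ?_) u
  simp only [Finset.mem_compl, not_not, Finset.mem_insert, Finset.mem_singleton] at hx
  rcases hx with rfl | rfl | rfl
  exacts [signedWeight_self, signedWeight_add_three_eq_zero hlam.1 hv0 hv3, hzero]

lemma exists_vertex_signedWeight_eq_zero (hq : GeneralPosition q)
    (hlam : lam ∈ cofDependences 3 q G13) {e : Pair 6} (he : e ∈ G13)
    (he03 : e.val ≠ (0, 3)) (hzero : lam e = 0) :
    ∃ v, ∀ w, signedWeight 3 lam v w = 0 := by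
  obtain ⟨⟨i, j⟩, hij⟩ := e
  have hweight : signedWeight 3 lam i j = 0 :=
    signedWeight_eq_zero_iff.2 ⟨fun _ => hzero, fun h => absurd hij h.not_gt⟩
  have hends : ∀ i j : Fin 6, i < j → (i, j) ≠ (1, 4) → (i, j) ≠ (2, 5) → (i, j) ≠ (0, 3) →
      j ≠ i + 3 ∧ i ≠ j + 3 ∧ (i ≠ 0 ∧ i ≠ 3 ∨ j ≠ 0 ∧ j ≠ 3) := by decide
  obtain ⟨hji, hij3, ⟨hi0, hi3⟩ | ⟨hj0, hj3⟩⟩ := hends i j hij he.1 he.2 he03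
  · exact ⟨i, signedWeight_eq_zero_of_degree_four hq hlam hi0 hi3 hij.ne' hji hweight⟩
  · exact ⟨j, signedWeight_eq_zero_of_degree_four hq hlam hj0 hj3 hij.ne hij3
      (signedWeight_comm_eq_zero hweight)⟩

lemma signedWeight_eq_zero_of_forall_at_vertex (hq : GeneralPosition q)
    (hlam : lam ∈ cofDependences 3 q G13) {v : Fin 6}
    (hv : ∀ w, signedWeight 3 lam v w = 0) {u : Fin 6} (hu0 : u ≠ 0) (hu3 : u ≠ 3) (w : Fin 6) :
    signedWeight 3 lam u w = 0 := by
  have hadj {s t : Fin 6} (ht0 : t ≠ 0) (ht3 : t ≠ 3) (hst : s ≠ t) (hst3 : s ≠ t + 3)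
      (hs : ∀ w, signedWeight 3 lam s w = 0) : ∀ w, signedWeight 3 lam t w = 0 :=
    signedWeight_eq_zero_of_degree_four hq hlam ht0 ht3 hst hst3
      (signedWeight_comm_eq_zero (hs t))
  by_cases hvu : v ≠ u ∧ v ≠ u + 3
  · exact hadj hu0 hu3 hvu.1 hvu.2 hv w
  · have hmid : ∀ v u : Fin 6, ¬(v ≠ u ∧ v ≠ u + 3) →
        ∃ t, (t ≠ 0 ∧ t ≠ 3) ∧ (v ≠ t ∧ v ≠ t + 3) ∧ t ≠ u ∧ t ≠ u + 3 := by decide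
    obtain ⟨t, ⟨ht0, ht3⟩, ⟨hvt, hvt3⟩, htu, htu3⟩ := hmid v u hvu
    exact hadj hu0 hu3 htu htu3 (hadj ht0 ht3 hvt hvt3 hv) w

lemma eq_zero_of_mem_cofDependences_G13_of_apply_eq_zero (hq : GeneralPosition q)
    (hlam : lam ∈ cofDependences 3 q G13) {e : Pair 6} (he : e ∈ G13)
    (he03 : e.val ≠ (0, 3)) (hzero : lam e = 0) : lam = 0 := by
  obtain ⟨v, hv⟩ := exists_vertex_signedWeight_eq_zero hq hlam he he03 hzero
  have hcycle {u : Fin 6} (hu0 : u ≠ 0) (hu3 : u ≠ 3) (w : Fin 6) :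
      signedWeight 3 lam u w = 0 := signedWeight_eq_zero_of_forall_at_vertex hq hlam hv hu0 hu3 w
  have hvertex0 : ∀ w, signedWeight 3 lam 0 w = 0 := by
    refine signedWeight_eq_zero_of_card_eq (N := {1, 2, 3}) hq hlam rfl (by decide) fun w hw => ?_
    rcases eq_or_ne w 0 with rfl | hw0
    · exact signedWeight_self
    · exact signedWeight_comm_eq_zero (hcycle hw0 (fun h => hw (by simp [h])) 0)
  refine eq_zero_of_forall_signedWeight_eq_zero (d := 3) fun u w => ?_
  rcases eq_or_ne u 0 with rfl | hu0
  · exact hvertex0 w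
  rcases eq_or_ne w 0 with rfl | hw0
  · exact signedWeight_comm_eq_zero (hvertex0 u)
  rcases eq_or_ne u 3 with rfl | hu3
  · rcases eq_or_ne w 3 with rfl | hw3
    exacts [signedWeight_self, signedWeight_comm_eq_zero (hcycle hw0 hw3 3)]
  · exact hcycle hu0 hu3 w

lemma exists_mem_cofDependences_G13_ne_zero (hq : GeneralPosition q) :
    ∃ lam ∈ cofDependences 3 q G13, lam ≠ 0 := by
  obtain ⟨h01, h02, h12⟩ :=
    ne_of_det2_sub_ne_zero (hq 0 1 2 (by decide) (by decide) (by decide))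
  let S : Finset (Pair 6) := {⟨(1, 4), by decide⟩, ⟨(2, 5), by decide⟩}ᶜ
  have hS : (S : Set (Pair 6)) = G13 := by
    ext e
    simp [S, G13, Subtype.ext_iff, and_comm]
  exact hS ▸ exists_mem_cofDependences_ne_zero h01 h02 h12 (S := S) (by decide)

end G13

/-- For six points in general position, the space of linear dependences among
the rows of `C₃(q)` indexed by `G = K₆ - {25, 36}` is exactly one-dimensional, and every nonzero
dependence is nonzero on every edge of `G` other than `{1,4}`. -/
theorem stmt13 (q : Fin 6 → ℝ × ℝ)
    (hgen : ∀ i j k : Fin 6, i ≠ j → i ≠ k → j ≠ k →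
      det2 (q j - q i) (q k - q i) ≠ 0) :
    ∃ lam0 : Pair 6 → ℝ, lam0 ≠ 0 ∧
      (∀ e, lam0 e ≠ 0 → e ∈ G13) ∧
      (∑ e : Pair 6, lam0 e • cofRow 3 q e = 0) ∧
      (∀ lam : Pair 6 → ℝ, (∀ e, lam e ≠ 0 → e ∈ G13) →
        (∑ e : Pair 6, lam e • cofRow 3 q e = 0) → ∃ c : ℝ, lam = c • lam0) ∧
      (∀ lam : Pair 6 → ℝ, (∀ e, lam e ≠ 0 → e ∈ G13) →
        (∑ e : Pair 6, lam e • cofRow 3 q e = 0) → lam ≠ 0 →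
        ∀ e ∈ G13, e.val ≠ ((0 : Fin 6), (3 : Fin 6)) → lam e ≠ 0) := by
  have hrigid {lam : Pair 6 → ℝ} (hlam : lam ∈ cofDependences 3 q G13) {e : Pair 6}
      (he : e ∈ G13) (he03 : e.val ≠ (0, 3)) (hzero : lam e = 0) : lam = 0 :=
    eq_zero_of_mem_cofDependences_G13_of_apply_eq_zero hgen hlam he he03 hzero
  obtain ⟨lam0, hmem0, hne0⟩ := exists_mem_cofDependences_G13_ne_zero (q := q) hgen
  refine ⟨lam0, hne0, hmem0.1, hmem0.2, fun lam hsupp hsum => ?_,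
    fun lam hsupp hsum hne e he he03 hzero => hne (hrigid ⟨hsupp, hsum⟩ he he03 hzero)⟩
  let e01 : Pair 6 := ⟨(0, 1), by decide⟩
  have he01 : e01 ∈ G13 := ⟨by decide, by decide⟩
  have h01 : lam0 e01 ≠ 0 := fun h => hne0 (hrigid hmem0 he01 (by decide) h)
  refine ⟨lam e01 / lam0 e01, sub_eq_zero.1 (hrigid (e := e01) ?_ he01 (by decide) ?_)⟩
  · exact Submodule.sub_mem _ ⟨hsupp, hsum⟩ (Submodule.smul_mem _ _ hmem0)
  · simp [h01]
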